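/- Let I ⊆ ℝ be an open interval and let S, R : I → Mat(n×n, ℝ) be maps with S(r) and R(r) symmetric for every r ∈ I, S differentiable, and satisfying the matrix Riccati equation S'(r) = −S(r)² − R(r) for every r ∈ I. Let μ_min(r) denote the smallest eigenvalue of S(r). Then at every point r₀ ∈ I where μ_min is differentiable, μ_min'(r₀) ≥ −μ_min(r₀)² − λ_max(R(r₀)), where λ_max(R(r₀)) denotes the largest eigenvalue of the symmetric matrix R(r₀). -/

import Mathlib

open Set Filter Topology Matrix

/-- `μ` is the largest (real) eigenvalue of the matrix `A`. -/
def IsMaxEigenvalue {n : ℕ} (A : Matrix (Fin n) (Fin n) ℝ) (μ : ℝ) : Prop :=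
  (∃ v : Fin n → ℝ, v ≠ 0 ∧ A.mulVec v = μ • v) ∧
  ∀ μ' : ℝ, (∃ v : Fin n → ℝ, v ≠ 0 ∧ A.mulVec v = μ' • v) → μ' ≤ μ

/-- `μ` is the smallest (real) eigenvalue of the matrix `A`. -/
def IsMinEigenvalue {n : ℕ} (A : Matrix (Fin n) (Fin n) ℝ) (μ : ℝ) : Prop :=
  (∃ v : Fin n → ℝ, v ≠ 0 ∧ A.mulVec v = μ • v) ∧
  ∀ μ' : ℝ, (∃ v : Fin n → ℝ, v ≠ 0 ∧ A.mulVec v = μ' • v) → μ ≤ μ'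

/-!
If `v` is an eigenvector of `S r₀` for its smallest eigenvalue `μ r₀`, then
`r ↦ v⋆ S(r) v - μ(r) v⋆ v` is nonnegative near `r₀` and vanishes at `r₀`, so its derivative
vanishes there: `μ'(r₀) v⋆ v = v⋆ S'(r₀) v` (Hellmann–Feynman). The Riccati equation turns the
right-hand side into `-μ(r₀)² v⋆ v - v⋆ R v`, and `v⋆ R v` is at most `λ_max(R) v⋆ v`.
-/

section Spectrum

variable {ι : Type*} [Fintype ι] [DecidableEq ι]

theorem mem_spectrum_iff_exists_mulVec_eq_smul {K : Type*} [Field K] {A : Matrix ι ι K} {μ : K} :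
    μ ∈ spectrum K A ↔ ∃ v : ι → K, v ≠ 0 ∧ A *ᵥ v = μ • v := by
  rw [← spectrum_toLin', ← Module.End.hasEigenvalue_iff_mem_spectrum]
  constructor
  · intro h
    obtain ⟨v, hv⟩ := h.exists_hasEigenvector
    exact ⟨v, hv.2, hv.apply_eq_smul⟩
  · rintro ⟨v, hv, hAv⟩
    exact Module.End.hasEigenvalue_of_hasEigenvector
      (Module.End.hasEigenvector_iff.2 ⟨Module.End.mem_eigenspace_iff.2 hAv, hv⟩)

theorem isMinEigenvalue_iff_isLeast_spectrum {n : ℕ} {A : Matrix (Fin n) (Fin n) ℝ} {μ : ℝ} :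
    IsMinEigenvalue A μ ↔ IsLeast (spectrum ℝ A) μ := by
  simp only [IsMinEigenvalue, IsLeast, mem_lowerBounds, mem_spectrum_iff_exists_mulVec_eq_smul]

theorem isMaxEigenvalue_iff_isGreatest_spectrum {n : ℕ} {A : Matrix (Fin n) (Fin n) ℝ} {μ : ℝ} :
    IsMaxEigenvalue A μ ↔ IsGreatest (spectrum ℝ A) μ := by
  simp only [IsMaxEigenvalue, IsGreatest, mem_upperBounds, mem_spectrum_iff_exists_mulVec_eq_smul]

end Spectrum

section Hermitian

variable {𝕜 ι : Type*} [RCLike 𝕜]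

theorem isHermitian_of_hasDerivAt {S : ℝ → Matrix ι ι 𝕜} {S' : Matrix ι ι 𝕜} {r₀ : ℝ}
    (hS : ∀ᶠ r in 𝓝 r₀, (S r).IsHermitian)
    (hS' : ∀ i j, HasDerivAt (fun r ↦ S r i j) (S' i j) r₀) : S'.IsHermitian := by
  refine IsHermitian.ext fun i j ↦ (hS' j i).star.unique ((hS' i j).congr_of_eventuallyEq ?_)
  filter_upwards [hS] with r hr using hr.apply i j

variable [Fintype ι]

theorem hasDerivAt_re_dotProduct_mulVec {S : ℝ → Matrix ι ι 𝕜} {S' : Matrix ι ι 𝕜} {r₀ : ℝ}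
    (hS' : ∀ i j, HasDerivAt (fun r ↦ S r i j) (S' i j) r₀) (u v : ι → 𝕜) :
    HasDerivAt (fun r ↦ RCLike.re (u ⬝ᵥ S r *ᵥ v)) (RCLike.re (u ⬝ᵥ S' *ᵥ v)) r₀ := by
  have hform : HasDerivAt (fun r ↦ u ⬝ᵥ S r *ᵥ v) (u ⬝ᵥ S' *ᵥ v) r₀ :=
    HasDerivAt.fun_sum fun i _ ↦ HasDerivAt.const_mul _ <|
      HasDerivAt.fun_sum fun j _ ↦ (hS' i j).mul_const _
  exact RCLike.reCLM.hasFDerivAt.comp_hasDerivAt r₀ hform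

theorem re_dotProduct_riccati_mulVec_of_mulVec_eq_smul {A R : Matrix ι ι 𝕜} {μ : ℝ} {v : ι → 𝕜}
    (hv : A *ᵥ v = μ • v) (u : ι → 𝕜) :
    RCLike.re (u ⬝ᵥ (-(A * A) - R) *ᵥ v) =
      -μ ^ 2 * RCLike.re (u ⬝ᵥ v) - RCLike.re (u ⬝ᵥ R *ᵥ v) := by
  have hAA : (A * A) *ᵥ v = μ ^ 2 • v := by
    rw [← mulVec_mulVec, hv, mulVec_smul, hv, smul_smul, sq]
  rw [sub_mulVec, neg_mulVec, hAA, dotProduct_sub, dotProduct_neg, dotProduct_smul, map_sub,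
    map_neg, RCLike.smul_re, neg_mul]

variable [DecidableEq ι]

theorem exists_mulVec_eq_smul_of_mem_spectrum_real {A : Matrix ι ι 𝕜} {μ : ℝ}
    (hμ : μ ∈ spectrum ℝ A) : ∃ v : ι → 𝕜, v ≠ 0 ∧ A *ᵥ v = μ • v := by
  rw [← spectrum.algebraMap_mem_iff 𝕜, mem_spectrum_iff_exists_mulVec_eq_smul] at hμ
  simpa only [algebraMap_smul] using hμ

open scoped MatrixOrder in
theorem mul_re_dotProduct_le_of_mem_lowerBounds_spectrum {A : Matrix ι ι 𝕜} (hA : A.IsHermitian)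
    {l : ℝ} (hl : l ∈ lowerBounds (spectrum ℝ A)) (v : ι → 𝕜) :
    l * RCLike.re (star v ⬝ᵥ v) ≤ RCLike.re (star v ⬝ᵥ A *ᵥ v) := by
  have hle : algebraMap ℝ (Matrix ι ι 𝕜) l ≤ A :=
    (algebraMap_le_iff_le_spectrum hA.isSelfAdjoint).2 fun _ hx ↦ hl hx
  have hform := (Matrix.le_iff.1 hle).re_dotProduct_nonneg v
  rw [Algebra.algebraMap_eq_smul_one, sub_mulVec, smul_mulVec, one_mulVec, dotProduct_sub,
    dotProduct_smul, map_sub, RCLike.smul_re] at hform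
  exact sub_nonneg.1 hform

theorem re_dotProduct_mulVec_le_of_mem_upperBounds_spectrum {A : Matrix ι ι 𝕜}
    (hA : A.IsHermitian) {l : ℝ} (hl : l ∈ upperBounds (spectrum ℝ A)) (v : ι → 𝕜) :
    RCLike.re (star v ⬝ᵥ A *ᵥ v) ≤ l * RCLike.re (star v ⬝ᵥ v) := by
  have hneg : -l ∈ lowerBounds (spectrum ℝ (-A)) := by
    rw [← spectrum.neg_eq]
    exact fun x hx ↦ neg_le.1 (hl hx)
  have hform := mul_re_dotProduct_le_of_mem_lowerBounds_spectrum hA.neg hneg v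
  rw [neg_mulVec, dotProduct_neg, map_neg, neg_mul] at hform
  exact neg_le_neg_iff.1 hform

theorem hellmann_feynman_of_mem_lowerBounds_spectrum {S : ℝ → Matrix ι ι 𝕜} {S' : Matrix ι ι 𝕜}
    {μ : ℝ → ℝ} {μ' r₀ : ℝ} (hS : ∀ᶠ r in 𝓝 r₀, (S r).IsHermitian)
    (hS' : ∀ i j, HasDerivAt (fun r ↦ S r i j) (S' i j) r₀)
    (hμ : ∀ᶠ r in 𝓝 r₀, μ r ∈ lowerBounds (spectrum ℝ (S r))) (hμ' : HasDerivAt μ μ' r₀)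
    {v : ι → 𝕜} (hv : S r₀ *ᵥ v = μ r₀ • v) :
    μ' * RCLike.re (star v ⬝ᵥ v) = RCLike.re (star v ⬝ᵥ S' *ᵥ v) := by
  let gap : ℝ → ℝ := fun r ↦ RCLike.re (star v ⬝ᵥ S r *ᵥ v) - μ r * RCLike.re (star v ⬝ᵥ v)
  have hgap_zero : gap r₀ = 0 := by
    simp only [gap, hv, dotProduct_smul, RCLike.smul_re, sub_self]
  have hgap_min : IsLocalMin gap r₀ := by
    filter_upwards [hS, hμ] with r hSr hμr
    rw [hgap_zero]
    exact sub_nonneg.2 (mul_re_dotProduct_le_of_mem_lowerBounds_spectrum hSr hμr v)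
  have hgap_deriv := (hasDerivAt_re_dotProduct_mulVec hS' (star v) v).sub <|
    hμ'.mul_const (RCLike.re (star v ⬝ᵥ v))
  exact (sub_eq_zero.1 (hgap_min.hasDerivAt_eq_zero hgap_deriv)).symm

open scoped ComplexOrder in
theorem mu_min_riccati_inequality_general {S : ℝ → Matrix ι ι 𝕜} {R : Matrix ι ι 𝕜}
    {μ : ℝ → ℝ} {μ' r₀ l : ℝ} (hS : ∀ᶠ r in 𝓝 r₀, (S r).IsHermitian)
    (hODE : ∀ i j, HasDerivAt (fun r ↦ S r i j) ((-(S r₀ * S r₀) - R) i j) r₀)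
    (hμ : ∀ᶠ r in 𝓝 r₀, μ r ∈ lowerBounds (spectrum ℝ (S r)))
    (hμ₀ : μ r₀ ∈ spectrum ℝ (S r₀)) (hμ' : HasDerivAt μ μ' r₀)
    (hl : l ∈ upperBounds (spectrum ℝ R)) :
    -(μ r₀) ^ 2 - l ≤ μ' := by
  obtain ⟨v, hv, hSv⟩ := exists_mulVec_eq_smul_of_mem_spectrum_real hμ₀
  have hv_pos : 0 < RCLike.re (star v ⬝ᵥ v) :=
    (RCLike.pos_iff.1 (dotProduct_star_self_pos_iff.2 hv)).1
  have hR : R.IsHermitian := by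
    -- The Riccati equation gives `R = -S² - S'`.
    have hSS : (S r₀ * S r₀).IsHermitian := sq (S r₀) ▸ hS.self_of_nhds.pow 2
    simpa only [sub_sub_cancel] using hSS.neg.sub (isHermitian_of_hasDerivAt hS hODE)
  refine le_of_mul_le_mul_right ?_ hv_pos
  calc (-(μ r₀) ^ 2 - l) * RCLike.re (star v ⬝ᵥ v)
      = -(μ r₀) ^ 2 * RCLike.re (star v ⬝ᵥ v) - l * RCLike.re (star v ⬝ᵥ v) := sub_mul _ _ _
    _ ≤ -(μ r₀) ^ 2 * RCLike.re (star v ⬝ᵥ v) - RCLike.re (star v ⬝ᵥ R *ᵥ v) :=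
        sub_le_sub_left (re_dotProduct_mulVec_le_of_mem_upperBounds_spectrum hR hl v) _
    _ = RCLike.re (star v ⬝ᵥ (-(S r₀ * S r₀) - R) *ᵥ v) :=
        (re_dotProduct_riccati_mulVec_of_mulVec_eq_smul hSv (star v)).symm
    _ = μ' * RCLike.re (star v ⬝ᵥ v) :=
        (hellmann_feynman_of_mem_lowerBounds_spectrum hS hODE hμ hμ' hSv).symm

end Hermitian

/-- **Riccati inequality for the smallest eigenvalue.** Let `S, R : (a,b) →
Mat(n×n,ℝ)` take symmetric values, with `S` differentiable and satisfying the
matrix Riccati equation `S' = -S² - R`. If the smallest eigenvalue function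
`μ_min` of `S` is differentiable at `r₀ ∈ (a,b)` with derivative `m`, then
`m ≥ -μ_min(r₀)² - λ_max(R(r₀))`. -/
theorem mu_min_riccati_inequality {n : ℕ} (a b : ℝ)
    (S R : ℝ → Matrix (Fin n) (Fin n) ℝ)
    (hSsym : ∀ r ∈ Ioo a b, (S r).IsSymm)
    (hRsym : ∀ r ∈ Ioo a b, (R r).IsSymm)
    (hODE : ∀ r ∈ Ioo a b, ∀ i j,
      HasDerivAt (fun s => S s i j) ((-(S r * S r) - R r) i j) r)
    (μmin : ℝ → ℝ)
    (hμ : ∀ r ∈ Ioo a b, IsMinEigenvalue (S r) (μmin r))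
    (r₀ : ℝ) (hr₀ : r₀ ∈ Ioo a b)
    (m : ℝ) (hm : HasDerivAt μmin m r₀)
    (lR : ℝ) (hlR : IsMaxEigenvalue (R r₀) lR) :
    -(μmin r₀) ^ 2 - lR ≤ m := by
  have hnhds : Ioo a b ∈ 𝓝 r₀ := Ioo_mem_nhds hr₀.1 hr₀.2
  have hleast : ∀ r ∈ Ioo a b, IsLeast (spectrum ℝ (S r)) (μmin r) := fun r hr ↦
    isMinEigenvalue_iff_isLeast_spectrum.1 (hμ r hr)
  exact mu_min_riccati_inequality_general
    (eventually_of_mem hnhds fun r hr ↦ isHermitian_iff_isSymm.2 (hSsym r hr)) (hODE r₀ hr₀)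
    (eventually_of_mem hnhds fun r hr ↦ (hleast r hr).2) (hleast r₀ hr₀).1 hm
    (isMaxEigenvalue_iff_isGreatest_spectrum.1 hlR).2
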